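/- Let Q₁, Q₂ be nonzero elements of K with [w₁+1] ≠ 0 and [w₂+1] ≠ 0, and set κ_L = [w₁]/[w₁+1], κ_R = [w₂]/[w₂+1] and δ = q + q^{−1}. For n ≥ 3 let M′ be the (n+1)×(n+1) matrix over K, with rows and columns indexed by 0,…,n, defined by: M′₀₀ = M′₀₁ = M′₁₀ = κ_L; M′₀₂ = M′₂₀ = 1; M′_{ii} = δ for 1 ≤ i ≤ n−1; M′_{i,i+1} = M′_{i+1,i} = 1 for 1 ≤ i ≤ n−2; M′_{n−1,n} = M′_{n,n−1} = M′_{nn} = κ_R; and all other entries 0 (the Gram matrix of the symplectic blob cell module with n−2 undecorated propagating lines, with both blob generators normalised to be idempotent). Then det M′ = [w₂]·[w₁+2]·[w₁−w₂−n+2] / ([w₁+1]²·[w₂+1]²). -/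

import Mathlib

/-- The shifted quantum bracket `[w+m] = (Q·q^m - Q⁻¹·q^{-m})/(q - q⁻¹)`,
where `Q` is thought of as `q^w` for a formal exponent `w`. -/
noncomputable def qbr {K : Type*} [Field K] (q Q : K) (m : ℤ) : K :=
  (Q * q ^ m - Q⁻¹ * q ^ (-m)) / (q - q⁻¹)

theorem tridiag_det {K : Type*} [Field K] (f : ℕ → ℕ → K)
    (h1 : ∀ i j, i + 1 < j → f i j = 0) (h2 : ∀ i j, j + 1 < i → f i j = 0) (n : ℕ) :
    (Matrix.of fun i j : Fin (n + 2) => f i j).det =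
      f (n+1) (n+1) * (Matrix.of fun i j : Fin (n + 1) => f i j).det
      - f n (n+1) * f (n+1) n * (Matrix.of fun i j : Fin n => f i j).det := by
  rw [Matrix.det_succ_row _ (Fin.last (n+1)), Fin.sum_univ_castSucc, Fin.sum_univ_castSucc]
  rw [Finset.sum_eq_zero]
  · have hA : ((Matrix.of fun i j : Fin (n + 2) => f i j).submatrix (Fin.last (n+1)).succAbove
        (Fin.last (n+1)).succAbove) = (Matrix.of fun i j : Fin (n + 1) => f i j) := by
      ext i j
      simp
    have hB : ((Matrix.of fun i j : Fin (n + 2) => f i j).submatrix (Fin.last (n+1)).succAbove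
        (Fin.last n).castSucc.succAbove).det =
          f n (n+1) * (Matrix.of fun i j : Fin n => f i j).det := by
      rw [Matrix.det_succ_column _ (Fin.last n), Fin.sum_univ_castSucc, Finset.sum_eq_zero]
      · have hC : (((Matrix.of fun i j : Fin (n + 2) => f i j).submatrix
            (Fin.last (n+1)).succAbove (Fin.last n).castSucc.succAbove).submatrix
            (Fin.last n).succAbove (Fin.last n).succAbove)
              = (Matrix.of fun i j : Fin n => f i j) := by
          ext i j
          have : (Fin.last n).castSucc.succAbove j.castSucc = j.castSucc.castSucc := by
            rw [Fin.succAbove_of_castSucc_lt]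
            simp [Fin.lt_def]
          simp [this]
        rw [hC]
        have : (Fin.last n).castSucc.succAbove (Fin.last n) = Fin.last (n+1) := by
          rw [Fin.succAbove_of_le_castSucc] <;> simp
        simp [this, ← two_mul]
      · intro i _
        have : (Fin.last n).castSucc.succAbove (Fin.last n) = Fin.last (n+1) := by
          rw [Fin.succAbove_of_le_castSucc] <;> simp
        have h := h1 i (n+1) (by omega)
        simp [this, h]
    rw [hA, hB]
    have e1 : (-1 : K) ^ (n + 1 + n) = -1 := by
      rw [show n + 1 + n = 2 * n + 1 by ring, pow_succ, pow_mul]; simp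
    have e2 : (-1 : K) ^ (n + 1 + (n + 1)) = 1 := by
      rw [← two_mul, pow_mul]; simp
    simp [e1, e2]
    ring
  · intro i _
    have h := h2 (n+1) i (by omega)
    simp [h]

theorem qbr_rec {K : Type*} [Field K] (q Q : K) (hq : q ≠ 0) (m : ℤ) :
    qbr q Q (m - 1) = (q + q⁻¹) * qbr q Q m - qbr q Q (m + 1) := by
  unfold qbr
  rw [show -(m-1) = -m + 1 by ring, show -(m+1) = -m - 1 by ring, zpow_add₀ hq, zpow_sub₀ hq,
    zpow_add₀ hq, zpow_sub₀ hq]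
  simp only [zpow_one]
  field_simp
  ring

theorem qbr_cross {K : Type*} [Field K] (q Q P : K) (hq : q ≠ 0) (hq2 : q ^ 2 ≠ 1)
    (hQ : Q ≠ 0) (hP : P ≠ 0) (m : ℤ) :
    qbr q Q m * qbr q P 1 - qbr q P 0 * qbr q Q (m + 1) = qbr q (Q * P⁻¹) m := by
  have h : q ^ 2 - 1 ≠ 0 := sub_ne_zero.2 hq2
  have h' : q - q⁻¹ ≠ 0 := by
    intro h0
    apply h
    field_simp at h0
    simpa using h0
  have hx : q ^ m ≠ 0 := zpow_ne_zero _ hq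
  have hd : q - q⁻¹ = (q ^ 2 - 1) / q := by field_simp
  unfold qbr
  rw [zpow_neg q (m+1), zpow_add₀ hq, zpow_neg q m]
  simp only [zpow_one, zpow_neg, zpow_zero, neg_zero]
  rw [hd]
  generalize q ^ m = x at *
  field_simp
  ring

set_option maxHeartbeats 2000000 in
/-- Let `κ_L = [w₁]/[w₁+1]`, `κ_R = [w₂]/[w₂+1]`, `δ = q + q⁻¹`, and for `n ≥ 3` let `M′` be
the `(n+1)×(n+1)` matrix with `M′₀₀ = M′₀₁ = M′₁₀ = κ_L`, `M′₀₂ = M′₂₀ = 1`, diagonal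
entries `δ` for `1 ≤ i ≤ n-1`, entries `1` at `(i,i+1)`, `(i+1,i)` for `1 ≤ i ≤ n-2`,
`M′_{n-1,n} = M′_{n,n-1} = M′_{nn} = κ_R`, and `0` elsewhere (the Gram matrix of the
symplectic blob cell module with `n-2` undecorated propagating lines).
Then `det M′ = [w₂]·[w₁+2]·[w₁-w₂-n+2] / ([w₁+1]²·[w₂+1]²)`. -/
theorem symplectic_blob_gram_det {K : Type*} [Field K] (q : K) (hq : q ≠ 0)
    (hq2 : q ^ 2 ≠ 1)
    (Q₁ Q₂ : K) (hQ₁ : Q₁ ≠ 0) (hQ₂ : Q₂ ≠ 0)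
    (hw1 : qbr q Q₁ 1 ≠ 0) (hw2 : qbr q Q₂ 1 ≠ 0)
    (κL κR δ : K) (hκL : κL = qbr q Q₁ 0 / qbr q Q₁ 1)
    (hκR : κR = qbr q Q₂ 0 / qbr q Q₂ 1) (hδ : δ = q + q⁻¹)
    (n : ℕ) (hn : 3 ≤ n)
    (M' : Matrix (Fin (n + 1)) (Fin (n + 1)) K)
    (hM' : ∀ i j : Fin (n + 1), M' i j =
      if ((i : ℕ) = 0 ∧ (j : ℕ) = 0) ∨ ((i : ℕ) = 0 ∧ (j : ℕ) = 1) ∨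
          ((i : ℕ) = 1 ∧ (j : ℕ) = 0) then κL
      else if ((i : ℕ) = 0 ∧ (j : ℕ) = 2) ∨ ((i : ℕ) = 2 ∧ (j : ℕ) = 0) then 1
      else if ((i : ℕ) = n - 1 ∧ (j : ℕ) = n) ∨ ((i : ℕ) = n ∧ (j : ℕ) = n - 1) ∨
          ((i : ℕ) = n ∧ (j : ℕ) = n) then κR
      else if (i : ℕ) = (j : ℕ) then δ
      else if (i : ℕ) + 1 = (j : ℕ) ∨ (j : ℕ) + 1 = (i : ℕ) then 1
      else 0) :
    M'.det = qbr q Q₂ 0 * qbr q Q₁ 2 * qbr q (Q₁ * Q₂⁻¹) (2 - n) /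
      ((qbr q Q₁ 1) ^ 2 * (qbr q Q₂ 1) ^ 2) := by
  have hδL : δ - κL = qbr q Q₁ 2 / qbr q Q₁ 1 := by
    have := qbr_rec q Q₁ hq 1
    norm_num at this
    rw [hδ, hκL, this]
    field_simp
    ring
  obtain ⟨k, rfl⟩ : ∃ k, n = k + 3 := ⟨n - 3, by omega⟩
  let f : ℕ → ℕ → K := fun i j =>
    if i = 0 ∧ j = 0 then κL
    else if (i = k + 1 ∧ j = k + 2) ∨ (i = k + 2 ∧ j = k + 1) ∨ (i = k + 2 ∧ j = k + 2) then κR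
    else if i = j then δ
    else if i + 1 = j ∨ j + 1 = i then 1 else 0
  have f1 : ∀ i j, i + 1 < j → f i j = 0 := by
    intro i j h
    simp only [f]
    split_ifs <;> first | rfl | omega
  have f2 : ∀ i j, j + 1 < i → f i j = 0 := by
    intro i j h
    simp only [f]
    split_ifs <;> first | rfl | omega
  have hdet : M'.det = (δ - κL) * (Matrix.of fun i j : Fin (k + 3) => f i j).det := by
    have h01 : (1 : Fin (k + 3 + 1)) ≠ 0 := by simp
    rw [← Matrix.det_updateRow_add_smul_self M' h01 (-1), Matrix.det_succ_row _ 1,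
      Finset.sum_eq_single 1]
    · have hA : ((M'.updateRow 1 (M' 1 + (-1 : K) • M' 0)).submatrix (Fin.succAbove 1)
          (Fin.succAbove 1)) = (Matrix.of fun i j : Fin (k + 3) => f i j) := by
        ext i j
        have hv : ∀ i : Fin (k+3), ((Fin.succAbove (1 : Fin (k+3+1)) i : Fin (k+3+1)) : ℕ)
            = if (i : ℕ) = 0 then 0 else (i : ℕ) + 1 := by
          intro i
          simp only [Fin.succAbove, Fin.lt_def]
          simp
          split_ifs <;> simp_all
        rw [Matrix.submatrix_apply, Matrix.updateRow_ne (Fin.succAbove_ne _ _), hM']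
        simp only [hv, f, Matrix.of_apply]
        rcases i with ⟨i, hi⟩
        rcases j with ⟨j, hj⟩
        rcases i with _ | i <;> rcases j with _ | j
        · simp
        · simp
        · simp
        · simp
      rw [hA]
      simp [hM']
      left
      ring
    · intro j _ hj
      have : M' 1 j = M' 0 j := by
        rw [hM', hM']
        rcases j with ⟨j, hj'⟩
        have hj1 : j ≠ 1 := by
          rintro rfl
          exact hj rfl
        have v1 : ((1 : Fin (k + 3 + 1)) : ℕ) = 1 := by simp
        have v0 : ((0 : Fin (k + 3 + 1)) : ℕ) = 0 := by simp
        simp only [v0, v1]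
        grind
      simp [this]
    · simp
  have hE : ∀ m, m ≤ k + 1 →
      (Matrix.of fun i j : Fin m => f i j).det = qbr q Q₁ (1 - m) / qbr q Q₁ 1 ∧
      (Matrix.of fun i j : Fin (m + 1) => f i j).det = qbr q Q₁ (- m) / qbr q Q₁ 1 := by
    intro m
    induction m with
    | zero =>
      intro _
      simp [hw1, f, hκL]
    | succ m ih =>
      intro hm
      obtain ⟨ha, hb⟩ := ih (by omega)
      refine ⟨by rw [hb]; congr 2; push_cast; ring, ?_⟩
      rw [tridiag_det f f1 f2, ha, hb]
      have g1 : f (m+1) (m+1) = δ := by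
        simp only [f]
        grind
      have g2 : f m (m+1) = 1 := by
        simp only [f]
        grind
      have g3 : f (m+1) m = 1 := by
        simp only [f]
        grind
      rw [g1, g2, g3, hδ]
      have := qbr_rec q Q₁ hq (-m)
      rw [show (-((m + 1 : ℕ) : ℤ)) = -m - 1 by push_cast; ring, this,
        show (1 - m : ℤ) = -m + 1 by ring]
      ring
  obtain ⟨ha, hb⟩ := hE (k+1) le_rfl
  rw [hdet, hδL, tridiag_det f f1 f2, ha, hb]
  have g1 : f (k+1+1) (k+1+1) = κR := by
    simp only [f]
    grind
  have g2 : f (k+1) (k+1+1) = κR := by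
    simp only [f]
    grind
  have g3 : f (k+1+1) (k+1) = κR := by
    simp only [f]
    grind
  rw [g1, g2, g3, hκR]
  have hc := qbr_cross q Q₁ Q₂ hq hq2 hQ₁ hQ₂ (-((k + 1 : ℕ) : ℤ))
  rw [show (2 - ((k + 3 : ℕ) : ℤ)) = -((k + 1 : ℕ) : ℤ) by push_cast; ring, ← hc,
    show (1 - ((k + 1 : ℕ) : ℤ)) = -((k + 1 : ℕ) : ℤ) + 1 by ring]
  field_simp
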